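/- Let k ∈ ℕ and let ψ be a 3CNF formula over disjoint finite variable sets X and Y such that: (i) |X| ≥ 2k; (ii) for every truth assignment α : X → Bool whose weight is different from k, there is no truth assignment β : Y → Bool such that α ∪ β satisfies ψ; and (iii) every clause of ψ contains an occurrence of a variable from Y or a positive occurrence of a variable from X. Consider the Boolean constraint satisfaction instance with variable set Z = X ∪ {y^i : y ∈ Y, 1 ≤ i ≤ 2k+1}, domain {0,1}, whose constraints are the following clauses: for every clause c = l₁ ∨ l₂ ∨ l₃ of ψ and every choice, for t = 1,2,3, of a disjunction d_t — where d_t = l_t if the variable of l_t belongs to X, and d_t = l_t^{i₁} ∨ … ∨ l_t^{i_{k+1}} for some 1 ≤ i₁ < … < i_{k+1} ≤ 2k+1 if the variable y of l_t belongs to Y (here l_t^i denotes the literal on the copy y^i having the same sign as l_t) — the clause d₁ ∨ d₂ ∨ d₃. Then the following are equivalent: (1) for every truth assignment α : X → Bool of weight k there exists a truth assignment β : Y → Bool such that α ∪ β satisfies ψ; (2) the above constraint satisfaction instance is k-robustly satisfiable. -/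

import Mathlib

/-- The weight of a truth assignment: the number of variables it maps to true. -/
def weight {X : Type} [Fintype X] (α : X → Bool) : ℕ :=
  (Finset.univ.filter fun x => α x = true).card

/-- The literals over `Z = X ∪ {y^i : y ∈ Y, 1 ≤ i ≤ 2k+1}` obtained from a literal `l`
over `X ∪ Y`: a literal on a variable of `X` is kept, and a literal on a variable
`y ∈ Y` is replaced by the same-sign literals on the copies `y^i` for `i ∈ s`. -/
def litCopies {X Y : Type} (k : ℕ) (l : (X ⊕ Y) × Bool)
    (s : Finset (Fin (2 * k + 1))) :
    Set ((X ⊕ Y × Fin (2 * k + 1)) × Bool) :=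
  match l with
  | (Sum.inl x, b) => {(Sum.inl x, b)}
  | (Sum.inr y, b) => {p | ∃ i ∈ s, p = (Sum.inr (y, i), b)}

/-- The clause `d₁ ∨ d₂ ∨ d₃` generated from the clause `c` of `ψ` and the choice `S` of
`(k+1)`-subsets of copy indices for the `Y`-positions, viewed as the set of its literals. -/
def genClause {X Y : Type} {u : ℕ} (clauses : Fin u → Fin 3 → (X ⊕ Y) × Bool)
    (k : ℕ) (c : Fin u) (S : Fin 3 → Finset (Fin (2 * k + 1))) :
    Set ((X ⊕ Y × Fin (2 * k + 1)) × Bool) :=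
  ⋃ t : Fin 3, litCopies k (clauses c t) (S t)

/-- The constraints of the constructed CSP instance: all clauses generated from a clause
of `ψ` and a choice, for each `Y`-position, of `k+1` copy indices. -/
def cspConstraints {X Y : Type} {u : ℕ} (clauses : Fin u → Fin 3 → (X ⊕ Y) × Bool)
    (k : ℕ) : Set (Set ((X ⊕ Y × Fin (2 * k + 1)) × Bool)) :=
  {L | ∃ (c : Fin u) (S : Fin 3 → Finset (Fin (2 * k + 1))),
      (∀ t : Fin 3, (clauses c t).1.isRight = true → (S t).card = k + 1) ∧
      L = genClause clauses k c S}

/-- The number of variables on which the partial assignment `μ` is defined. -/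
def domCard {Z : Type} [Fintype Z] (μ : Z → Option Bool) : ℕ :=
  (Finset.univ.filter fun z => (μ z).isSome = true).card

/-- A partial assignment `μ` violates a clause constraint `L` (given as a set of
literals) if every variable of `L` is in the domain of `μ` and `μ` makes every
literal of `L` false. -/
def violates {Z : Type} (μ : Z → Option Bool) (L : Set (Z × Bool)) : Prop :=
  ∀ p ∈ L, μ p.1 = some (! p.2)

/-- A Boolean CSP instance over clause constraints `CC` is `k`-robustly satisfiable if
every partial assignment defined on exactly `k` variables that violates no constraint
extends to a total assignment satisfying all constraints. -/
def kRobustlySatisfiable {Z : Type} [Fintype Z] (CC : Set (Set (Z × Bool))) (k : ℕ) :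
    Prop :=
  ∀ μ : Z → Option Bool, domCard μ = k → (∀ L ∈ CC, ¬ violates μ L) →
    ∃ ν : Z → Bool, (∀ z b, μ z = some b → ν z = b) ∧ ∀ L ∈ CC, ∃ p ∈ L, ν p.1 = p.2

/-!
Each `y ∈ Y` is represented by `2k + 1` copies, and `k + 1` of them replace each occurrence of `y`
in a generated clause. A partial assignment on `k` variables therefore leaves one of these `k + 1`
copies free to take the value that a satisfying `β` gives to `y`; on `X` it can be completed to
weight exactly `k` because at least `k` variables of `X` remain unassigned. Conversely, let `α` have
weight `k` and assign only its true variables. This violates no generated clause, since each one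
contains an unassigned copy or a positive literal on `X`. In a satisfying extension some `k + 1`
copies of each `y` agree, and the constraints on these majorities yield a satisfying assignment of
`ψ`. It agrees with `α` on `X`, since otherwise its weight there would exceed `k`.
-/

open Finset

/-- The total assignment `σ` satisfies the 3CNF formula `ψ`, whose literals are pairs of a variable
and the value that makes the literal true. -/
def Satisfies {V : Type*} {u : ℕ} (ψ : Fin u → Fin 3 → V × Bool) (σ : V → Bool) : Prop :=
  ∀ c, ∃ t, σ (ψ c t).1 = (ψ c t).2

/-- The total assignment `ν` extends the partial assignment `μ`. -/
def IsExtension {Z : Type*} (μ : Z → Option Bool) (ν : Z → Bool) : Prop :=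
  ∀ z b, μ z = some b → ν z = b

/-- The total assignment that follows `μ` on its domain and `ν` elsewhere. -/
def override {Z : Type*} (ν : Z → Bool) (μ : Z → Option Bool) : Z → Bool :=
  fun z => (μ z).getD (ν z)

/-- The partial assignment on `X ∪ W` that sets to true the variables of `X` true under `α` and is
undefined everywhere else. It probes robustness with only `weight α` assigned variables. -/
def truePart {X : Type*} (W : Type*) (α : X → Bool) : X ⊕ W → Option Bool :=
  Sum.elim (fun x => if α x then some true else none) fun _ => none

theorem isExtension_override {Z : Type*} (ν : Z → Bool) (μ : Z → Option Bool) :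
    IsExtension μ (override ν μ) := fun z b hz => by
  simp [override, hz]

theorem override_eq_of_forall_eq {Z : Type*} {ν : Z → Bool} {μ : Z → Option Bool} {z : Z}
    (h : ∀ b, μ z = some b → ν z = b) : override ν μ z = ν z := by
  cases hz : μ z with
  | none => simp [override, hz]
  | some b => simp [override, hz, h b hz]

theorem isExtension_truePart_iff {X W : Type*} {α : X → Bool} {ν : X ⊕ W → Bool} :
    IsExtension (truePart W α) ν ↔ α ≤ ν ∘ Sum.inl := by
  simp [IsExtension, truePart, Pi.le_def, Bool.le_iff_imp]

theorem weight_strictMono {X : Type} [Fintype X] : StrictMono (weight (X := X)) := by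
  intro α α' h
  obtain ⟨hle, x, hx⟩ := Pi.lt_def.1 h
  obtain ⟨hαx, hα'x⟩ := Bool.lt_iff.1 hx
  refine card_lt_card (ssubset_iff_of_subset ?_ |>.2 ⟨x, by simpa using hα'x, by simpa using hαx⟩)
  exact monotone_filter_right _ fun x _ => Bool.le_iff_imp.1 (hle x)

theorem domCard_comp_le {W Z : Type} [Fintype W] [Fintype Z] {f : W → Z}
    (hf : Function.Injective f) (μ : Z → Option Bool) : domCard (μ ∘ f) ≤ domCard μ :=
  card_le_card_of_injOn f (fun w hw => by simpa using hw) hf.injOn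

theorem exists_mem_eq_none_of_domCard_lt_card {Z : Type} [Fintype Z] {μ : Z → Option Bool}
    {s : Finset Z} (h : domCard μ < s.card) : ∃ z ∈ s, μ z = none := by
  obtain ⟨z, hzs, hz⟩ := exists_mem_notMem_of_card_lt_card h
  exact ⟨z, hzs, by simpa using hz⟩

theorem domCard_truePart {X W : Type} [Fintype X] [Fintype W] (α : X → Bool) :
    domCard (truePart W α) = weight α := by
  simp only [domCard, weight, card_filter, Fintype.sum_sum_type]
  simp [truePart]

theorem exists_isExtension_weight_eq {X : Type} [Fintype X] {μ : X → Option Bool} {k : ℕ}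
    (hμ : domCard μ ≤ k) (hX : domCard μ + k ≤ Fintype.card X) :
    ∃ α, IsExtension μ α ∧ weight α = k := by
  classical
  let assigned : Finset X := {x | (μ x).isSome}
  let forcedTrue : Finset X := {x | μ x = some true}
  have hsub : forcedTrue ⊆ assigned := monotone_filter_right _ fun x _ hx => by simp [hx]
  have hlower : forcedTrue.card ≤ k := (card_le_card hsub).trans hμ
  have hupper : k ≤ (forcedTrue ∪ assignedᶜ).card := by
    have hfree : assignedᶜ.card = Fintype.card X - domCard μ := card_compl assigned
    have : assignedᶜ.card ≤ (forcedTrue ∪ assignedᶜ).card := card_le_card subset_union_right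
    lia
  obtain ⟨T, hTlower, hTupper, hT⟩ :=
    exists_subsuperset_card_eq subset_union_left hlower hupper
  refine ⟨fun x => decide (x ∈ T), fun x b hx => ?_, by simp [weight, hT]⟩
  cases b with
  | true => simpa using hTlower (show x ∈ forcedTrue by simp [forcedTrue, hx])
  | false =>
    have hxT : x ∉ T := fun hxT => by simpa [forcedTrue, assigned, hx] using hTupper hxT
    simpa using hxT

theorem exists_card_eq_forall_mem_eq {ι κ : Type*} [Fintype ι] [Fintype κ] {n : ℕ} (f : ι → κ)
    (h : Fintype.card κ * n < Fintype.card ι) :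
    ∃ (b : κ) (s : Finset ι), s.card = n + 1 ∧ ∀ i ∈ s, f i = b := by
  classical
  obtain ⟨b, hb⟩ := Fintype.exists_lt_card_fiber_of_mul_lt_card f h
  obtain ⟨s, hs, hcard⟩ := exists_subset_card_eq (Nat.succ_le_of_lt hb)
  exact ⟨b, s, hcard, fun i hi => (mem_filter.1 (hs hi)).2⟩

theorem not_violates_iff {Z : Type} {μ : Z → Option Bool} {L : Set (Z × Bool)} :
    ¬ violates μ L ↔ ∃ p ∈ L, μ p.1 ≠ some (!p.2) := by
  simp only [violates, not_forall, exists_prop, ne_eq]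

section Reduction

variable {X Y : Type} {u k : ℕ} {clauses : Fin u → Fin 3 → (X ⊕ Y) × Bool}

section Membership

variable {P : (X ⊕ Y × Fin (2 * k + 1)) × Bool → Prop} {s : Finset (Fin (2 * k + 1))} {b : Bool}

theorem exists_mem_litCopies_inl_iff {x : X} :
    (∃ p ∈ litCopies k (Sum.inl x, b) s, P p) ↔ P (Sum.inl x, b) :=
  exists_eq_left

theorem exists_mem_litCopies_inr_iff {y : Y} :
    (∃ p ∈ litCopies k (Sum.inr y, b) s, P p) ↔ ∃ i ∈ s, P (Sum.inr (y, i), b) :=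
  ⟨fun ⟨_, ⟨i, hi, rfl⟩, hP⟩ => ⟨i, hi, hP⟩, fun ⟨i, hi, hP⟩ => ⟨_, ⟨i, hi, rfl⟩, hP⟩⟩

theorem exists_mem_genClause_iff {c : Fin u} {S : Fin 3 → Finset (Fin (2 * k + 1))} :
    (∃ p ∈ genClause clauses k c S, P p) ↔
      ∃ t, ∃ p ∈ litCopies k (clauses c t) (S t), P p := by
  simp only [genClause, Set.mem_iUnion, ← exists_and_right]
  exact exists_comm

end Membership

theorem exists_mem_litCopies_override_eq [Fintype X] [Fintype Y]
    {μ : X ⊕ Y × Fin (2 * k + 1) → Option Bool} {α : X → Bool} {β : Y → Bool}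
    {l : (X ⊕ Y) × Bool} {s : Finset (Fin (2 * k + 1))} (hα : IsExtension (μ ∘ Sum.inl) α)
    (hs : l.1.isRight → domCard μ < s.card) (hl : Sum.elim α β l.1 = l.2) :
    ∃ p ∈ litCopies k l s, override (Sum.elim α (β ∘ Prod.fst)) μ p.1 = p.2 := by
  obtain ⟨x | y, b⟩ := l
  · exact exists_mem_litCopies_inl_iff.2 ((override_eq_of_forall_eq (hα x)).trans hl)
  · have hcopy : Function.Injective fun i : Fin (2 * k + 1) => (Sum.inr (y, i) : X ⊕ Y × _) :=
      Sum.inr_injective.comp (Prod.mk_right_injective y)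
    obtain ⟨i, his, hi⟩ := exists_mem_eq_none_of_domCard_lt_card
      ((domCard_comp_le hcopy μ).trans_lt (hs rfl))
    have hfree : μ (Sum.inr (y, i)) = none := hi
    refine exists_mem_litCopies_inr_iff.2 ⟨i, his, ?_⟩
    exact (override_eq_of_forall_eq (by simp [hfree])).trans hl

theorem not_violates_truePart_genClause (α : X → Bool) {c : Fin u}
    {S : Fin 3 → Finset (Fin (2 * k + 1))}
    (hclause : ∃ t, (clauses c t).1.isRight ∨ (clauses c t).1.isLeft ∧ (clauses c t).2)
    (hS : ∀ t, (clauses c t).1.isRight → (S t).Nonempty) :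
    ¬ violates (truePart _ α) (genClause clauses k c S) := by
  obtain ⟨t, ht⟩ := hclause
  refine not_violates_iff.2 (exists_mem_genClause_iff.2 ⟨t, ?_⟩)
  have hSt := hS t
  generalize clauses c t = l at ht hSt ⊢
  obtain ⟨x | y, b⟩ := l
  · have hb : b = true := by simpa using ht
    exact exists_mem_litCopies_inl_iff.2 (by simp [truePart, hb])
  · obtain ⟨i, hi⟩ := hSt rfl
    exact exists_mem_litCopies_inr_iff.2 ⟨i, hi, by simp [truePart]⟩

theorem exists_satisfies_of_forall_mem_cspConstraints {ν : X ⊕ Y × Fin (2 * k + 1) → Bool}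
    (hν : ∀ L ∈ cspConstraints clauses k, ∃ p ∈ L, ν p.1 = p.2) :
    ∃ β : Y → Bool, Satisfies clauses (Sum.elim (ν ∘ Sum.inl) β) := by
  have hmajority (y : Y) := exists_card_eq_forall_mem_eq (n := k)
    (fun i : Fin (2 * k + 1) => ν (Sum.inr (y, i))) (by simp)
  choose β s hcard hβ using hmajority
  refine ⟨β, fun c => ?_⟩
  let S (t : Fin 3) := Sum.elim (fun _ => ∅) s (clauses c t).1
  have hS (t : Fin 3) (ht : (clauses c t).1.isRight) : (S t).card = k + 1 := by
    obtain ⟨y, hy⟩ := Sum.isRight_iff.1 ht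
    simp [S, hy, hcard]
  obtain ⟨t, ht⟩ := exists_mem_genClause_iff.1 (hν _ ⟨c, S, hS, rfl⟩)
  refine ⟨t, ?_⟩
  dsimp only [S] at ht
  generalize clauses c t = l at ht ⊢
  obtain ⟨x | y, b⟩ := l
  · exact exists_mem_litCopies_inl_iff.1 ht
  · obtain ⟨i, hi, hνi⟩ := exists_mem_litCopies_inr_iff.1 ht
    exact (hβ y i hi).symm.trans hνi

variable [Fintype X] [Fintype Y]

theorem kRobustlySatisfiable_of_forall_weight_eq (hXcard : 2 * k ≤ Fintype.card X)
    (h : ∀ α : X → Bool, weight α = k → ∃ β : Y → Bool, Satisfies clauses (Sum.elim α β)) :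
    kRobustlySatisfiable (cspConstraints clauses k) k := by
  intro μ hμ _
  have hμX : domCard (μ ∘ Sum.inl) ≤ k := (domCard_comp_le Sum.inl_injective μ).trans_eq hμ
  obtain ⟨α, hαμ, hα⟩ := exists_isExtension_weight_eq hμX (by lia)
  obtain ⟨β, hβ⟩ := h α hα
  refine ⟨override (Sum.elim α (β ∘ Prod.fst)) μ, isExtension_override _ μ, ?_⟩
  rintro _ ⟨c, S, hS, rfl⟩
  obtain ⟨t, ht⟩ := hβ c
  exact exists_mem_genClause_iff.2
    ⟨t, exists_mem_litCopies_override_eq hαμ (fun hright => by simp [hS t hright, hμ]) ht⟩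

theorem exists_satisfies_of_kRobustlySatisfiable {α : X → Bool} (hα : weight α = k)
    (hweight : ∀ α' : X → Bool, k < weight α' → ∀ β : Y → Bool,
      ¬ Satisfies clauses (Sum.elim α' β))
    (hclause : ∀ c, ∃ t, (clauses c t).1.isRight ∨ (clauses c t).1.isLeft ∧ (clauses c t).2)
    (h : kRobustlySatisfiable (cspConstraints clauses k) k) :
    ∃ β : Y → Bool, Satisfies clauses (Sum.elim α β) := by
  have hnotViolates : ∀ L ∈ cspConstraints clauses k, ¬ violates (truePart _ α) L := by
    rintro _ ⟨c, S, hS, rfl⟩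
    exact not_violates_truePart_genClause α (hclause c)
      fun t ht => card_pos.1 (by simp [hS t ht])
  obtain ⟨ν, hνα, hν⟩ := h (truePart _ α) ((domCard_truePart α).trans hα) hnotViolates
  obtain ⟨β, hβ⟩ := exists_satisfies_of_forall_mem_cspConstraints hν
  have hle : α ≤ ν ∘ Sum.inl := isExtension_truePart_iff.1 hνα
  have heq : α = ν ∘ Sum.inl := by
    by_contra hne
    exact hweight _ (hα.symm.trans_lt (weight_strictMono (lt_of_le_of_ne hle hne))) β hβ
  exact ⟨β, heq ▸ hβ⟩

theorem statement5_general (hXcard : 2 * k ≤ Fintype.card X)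
    (hweight : ∀ α : X → Bool, k < weight α → ∀ β : Y → Bool,
      ¬ Satisfies clauses (Sum.elim α β))
    (hclause : ∀ c, ∃ t, (clauses c t).1.isRight ∨ (clauses c t).1.isLeft ∧ (clauses c t).2) :
    (∀ α : X → Bool, weight α = k → ∃ β : Y → Bool, Satisfies clauses (Sum.elim α β)) ↔
      kRobustlySatisfiable (cspConstraints clauses k) k :=
  ⟨kRobustlySatisfiable_of_forall_weight_eq hXcard,
    fun h _ hα => exists_satisfies_of_kRobustlySatisfiable hα hweight hclause h⟩

end Reduction

/-- Correctness of the reduction from ∀ᵏ∃*-WSat(3CNF) to Robust-CSP-SAT with domain size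
two: under the hypotheses (i) `|X| ≥ 2k`, (ii) existential assignments whose weight
differs from `k` admit no completion satisfying `ψ`, and (iii) every clause of `ψ`
contains a `Y`-variable or a positive occurrence of an `X`-variable, the 3CNF instance
`∀X(weight k).∃Y.ψ` is true iff the constructed CSP instance is `k`-robustly
satisfiable. -/
theorem statement5 {X Y : Type} [Fintype X] [Fintype Y] (k : ℕ) {u : ℕ}
    (clauses : Fin u → Fin 3 → (X ⊕ Y) × Bool)
    (hXcard : 2 * k ≤ Fintype.card X)
    (hweight : ∀ α : X → Bool, weight α ≠ k → ∀ β : Y → Bool,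
        ¬ ∀ c : Fin u, ∃ t : Fin 3, Sum.elim α β (clauses c t).1 = (clauses c t).2)
    (hclause : ∀ c : Fin u, ∃ t : Fin 3,
        (clauses c t).1.isRight = true ∨
        ((clauses c t).1.isLeft = true ∧ (clauses c t).2 = true)) :
    ((∀ α : X → Bool, weight α = k →
        ∃ β : Y → Bool, ∀ c : Fin u, ∃ t : Fin 3,
          Sum.elim α β (clauses c t).1 = (clauses c t).2) ↔
      kRobustlySatisfiable (cspConstraints clauses k) k) :=
  statement5_general hXcard (fun α hα => hweight α hα.ne') hclause
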